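/- Let p₁₀, p₀₁, p₂₀, p₁₁, p₀₂ be real numbers with p₁₀² + p₀₁² ≠ 0, and set P₁(θ) = p₁₀ cos θ + p₀₁ sin θ and P₂(θ) = p₂₀ cos²θ + p₁₁ cos θ sin θ + p₀₂ sin²θ. Then the equation dr/dθ = r(P₁(θ) r + P₂(θ) r²) has a center at r = 0 (equivalently, the origin of the cubic system x' = −y + x(P₁(x,y)+P₂(x,y)), y' = x + y(P₁(x,y)+P₂(x,y)) is a center) if and only if p₂₀ + p₀₂ = 0 and p₂₀(p₀₁² − p₁₀²) − p₁₁ p₁₀ p₀₁ = 0. -/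

import Mathlib

open Real

/-- A 2π-periodic scalar ODE `dr/dθ = F θ r` has a center at `r = 0` if every solution
with `|r 0|` sufficiently small is defined on `[0, 2π]` and satisfies `r (2π) = r 0`. -/
def HasCenterAtZero (F : ℝ → ℝ → ℝ) : Prop :=
  ∃ ε > (0 : ℝ), ∀ r : ℝ → ℝ, |r 0| < ε →
    (∀ θ ∈ Set.Icc (0 : ℝ) (2 * Real.pi), HasDerivAt r (F θ (r θ)) θ) →
    r (2 * Real.pi) = r 0

/-- Uniqueness-based reflection principle. -/
lemma center_reflect (P1 P2 r : ℝ → ℝ) (hc1 : Continuous P1) (hc2 : Continuous P2)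
    (t d : ℝ) (hd : 0 ≤ d)
    (hr : ∀ θ ∈ Set.Icc (t - d) (t + d),
      HasDerivAt r (r θ * (P1 θ * r θ + P2 θ * r θ ^ 2)) θ)
    (h1 : ∀ s, P1 (t + s) = - P1 (t - s)) (h2 : ∀ s, P2 (t + s) = - P2 (t - s)) :
    r (t + d) = r (t - d) := by
  have hA : ∀ s ∈ Set.Icc 0 d, HasDerivAt (fun s => r (t + s))
      (r (t + s) * (P1 (t + s) * r (t + s) + P2 (t + s) * r (t + s) ^ 2)) s := by
    intro s hs
    have := (hr (t + s) ⟨by linarith [hs.1], by linarith [hs.2]⟩).comp s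
      ((hasDerivAt_id s).const_add t)
    exact this.congr_deriv (by ring)
  have hB : ∀ s ∈ Set.Icc 0 d, HasDerivAt (fun s => r (t - s))
      (r (t - s) * (P1 (t + s) * r (t - s) + P2 (t + s) * r (t - s) ^ 2)) s := by
    intro s hs
    have := (hr (t - s) ⟨by linarith [hs.2], by linarith [hs.1]⟩).comp s
      ((hasDerivAt_id s).const_sub t)
    refine HasDerivAt.congr_deriv (this) ?_
    rw [h1, h2]; ring
  have cA : ContinuousOn (fun s => r (t + s)) (Set.Icc 0 d) :=
    fun s hs => (hA s hs).continuousAt.continuousWithinAt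
  have cB : ContinuousOn (fun s => r (t - s)) (Set.Icc 0 d) :=
    fun s hs => (hB s hs).continuousAt.continuousWithinAt
  have cg : ContinuousOn (fun s => P1 (t + s) * (r (t + s) + r (t - s)) +
      P2 (t + s) * (r (t + s) ^ 2 + r (t + s) * r (t - s) + r (t - s) ^ 2)) (Set.Icc 0 d) := by
    have e1 : Continuous fun s => P1 (t + s) := by fun_prop
    have e2 : Continuous fun s => P2 (t + s) := by fun_prop
    exact (e1.continuousOn.mul (cA.add cB)).add
      (e2.continuousOn.mul (((cA.pow 2).add (cA.mul cB)).add (cB.pow 2)))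
  obtain ⟨K, hK⟩ := isCompact_Icc.exists_bound_of_continuousOn cg
  have key := eq_zero_of_abs_deriv_le_mul_abs_self_of_eq_zero_right
    (f := fun s => r (t + s) - r (t - s)) (K := K) (cA.sub cB)
    (fun s hs => ((hA s ⟨hs.1, hs.2.le⟩).sub (hB s ⟨hs.1, hs.2.le⟩)).hasDerivWithinAt)
    (by simp) (by
      intro s hs
      have := hK s ⟨hs.1, hs.2.le⟩
      refine le_trans (le_of_eq ?_) (mul_le_mul_of_nonneg_right this (norm_nonneg _))
      rw [← norm_mul]
      congr 1
      ring)
  have := key d ⟨hd, le_rfl⟩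
  exact sub_eq_zero.1 this

/-- Large solutions of `z' = -P/(z-u)` exist on `[0, 2π]`. -/
lemma large_solution (P u : ℝ → ℝ) (hP : Continuous P) (hu : Continuous u) (N : ℝ) (hN : 1 ≤ N) :
    ∃ z : ℝ → ℝ, ∀ θ ∈ Set.Icc (0 : ℝ) (2 * π),
      HasDerivAt z (- P θ / (z θ - u θ)) θ ∧ N ≤ z θ - u θ ∧ N ≤ z θ := by
  obtain ⟨A', hA'⟩ := (isCompact_Icc (a := (-1 : ℝ)) (b := 7)).exists_bound_of_continuousOn
    hP.continuousOn
  obtain ⟨M, hM⟩ := (isCompact_Icc (a := (-1 : ℝ)) (b := 7)).exists_bound_of_continuousOn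
    hu.continuousOn
  have hA0 : 0 ≤ A' := (norm_nonneg _).trans (hA' 0 (by norm_num))
  have hM0 : 0 ≤ M := (norm_nonneg _).trans (hM 0 (by norm_num))
  obtain ⟨A, rfl⟩ : ∃ A : NNReal, (A : ℝ) = A' := ⟨⟨A', hA0⟩, rfl⟩
  let f : ℝ → ℝ → ℝ := fun θ z => - P θ / max (z - u θ) 1
  have hb : ∀ t ∈ Set.Icc (-1 : ℝ) 7, ∀ x : ℝ, ‖f t x‖ ≤ A := by
    intro t ht x
    have h1 : (1 : ℝ) ≤ max (x - u t) 1 := le_max_right _ _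
    simp only [f, norm_div, norm_neg]
    rw [Real.norm_of_nonneg (by linarith : (0 : ℝ) ≤ max (x - u t) 1)]
    exact (div_le_self (norm_nonneg _) h1).trans (hA' t ht)
  have hpl : IsPicardLindelof f (tmin := -1) (tmax := 7) ⟨0, by norm_num⟩
      (N + M + 7 * A) (7 * A) 0 A A := by
    refine ⟨?_, ?_, fun t ht x _ => hb t ht x, ?_⟩
    · intro t ht
      refine LipschitzOnWith.of_dist_le_mul fun x _ y _ => ?_
      have h1 : (1 : ℝ) ≤ max (x - u t) 1 := le_max_right _ _
      have h2 : (1 : ℝ) ≤ max (y - u t) 1 := le_max_right _ _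
      have h3 : |max (x - u t) 1 - max (y - u t) 1| ≤ |x - y| := by
        have := abs_max_sub_max_le_abs (x - u t) (y - u t) 1
        simpa using this
      have e : f t x - f t y = P t * (max (x - u t) 1 - max (y - u t) 1) /
          (max (x - u t) 1 * max (y - u t) 1) := by
        simp only [f]
        have : max (x - u t) 1 ≠ 0 := by linarith
        have : max (y - u t) 1 ≠ 0 := by linarith
        field_simp
        ring
      rw [Real.dist_eq, Real.dist_eq, e, abs_div, abs_mul]
      have h4 : 1 ≤ max (x - u t) 1 * max (y - u t) 1 := by nlinarith
      rw [abs_of_nonneg (by linarith : 0 ≤ max (x - u t) 1 * max (y - u t) 1)]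
      refine (div_le_self (by positivity) h4).trans ?_
      exact mul_le_mul (hA' t ht) h3 (abs_nonneg _) A.2
    · intro x _
      have : Continuous (fun t => max (x - u t) 1) := by fun_prop
      refine (Continuous.div (by fun_prop) this fun t => ?_).continuousOn
      have h1 : (1 : ℝ) ≤ max (x - u t) 1 := le_max_right _ _
      linarith
    · simp
      linarith
  obtain ⟨z, hz0, hz⟩ := hpl.exists_eq_forall_mem_Icc_hasDerivWithinAt₀
  have hz0' : z 0 = N + M + 7 * A := hz0
  refine ⟨z, fun θ hθ => ?_⟩
  have hpi := Real.pi_lt_d2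
  have hm : θ ∈ Set.Icc (-1 : ℝ) 7 := ⟨by linarith [hθ.1], by linarith [hθ.2]⟩
  have hd := Convex.norm_image_sub_le_of_norm_hasDerivWithin_le (C := A) hz
    (fun x hx => hb x hx (z x)) (convex_Icc _ _)
    (show (0 : ℝ) ∈ Set.Icc (-1 : ℝ) 7 by norm_num) hm
  have h7 : ‖θ - 0‖ ≤ 7 := by
    rw [Real.norm_eq_abs, abs_le]; constructor <;> linarith [hm.1, hm.2, hθ.1]
  have hd2 : ‖z θ - z 0‖ ≤ A * 7 := hd.trans (mul_le_mul_of_nonneg_left h7 hA0)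
  have hu1 := hM θ hm
  rw [Real.norm_eq_abs, abs_le] at hd2 hu1
  have g1 : N ≤ z θ - u θ := by linarith [hd2.1, hu1.2]
  refine ⟨?_, g1, by linarith [hd2.1]⟩
  have := (hz θ hm).hasDerivAt (Icc_mem_nhds (by linarith [hθ.1]) (by linarith [hθ.2]))
  simp only [f] at this
  rwa [max_eq_left (by linarith)] at this

/-- Under the center hypothesis, there are periodic solutions with arbitrarily large `z`. -/
lemma periodic_large (P1 P2 u : ℝ → ℝ) (hc2 : Continuous P2)
    (hu : ∀ θ, HasDerivAt u (P1 θ) θ) (hup : u (2 * π) = u 0)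
    (hC : HasCenterAtZero (fun θ r => r * (P1 θ * r + P2 θ * r ^ 2))) (N : ℝ) (hN : 1 ≤ N) :
    ∃ z : ℝ → ℝ, z 0 = z (2 * π) ∧ ∀ θ ∈ Set.Icc (0 : ℝ) (2 * π),
      HasDerivAt z (- P2 θ / (z θ - u θ)) θ ∧ N ≤ z θ - u θ ∧ N ≤ z θ := by
  obtain ⟨ε, hε, H⟩ := hC
  have huc : Continuous u := continuous_iff_continuousAt.2 fun θ => (hu θ).continuousAt
  obtain ⟨z, hz⟩ := large_solution P2 u hc2 huc (N + 1 / ε) (by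
    have : 0 < 1 / ε := by positivity
    linarith)
  have he : 0 < 1 / ε := by positivity
  have hpi := Real.pi_pos
  have hm0 : (0 : ℝ) ∈ Set.Icc (0 : ℝ) (2 * π) := ⟨le_rfl, by linarith⟩
  have hm1 : (2 * π) ∈ Set.Icc (0 : ℝ) (2 * π) := ⟨by linarith, le_rfl⟩
  refine ⟨z, ?_, fun θ hθ => ⟨(hz θ hθ).1, by linarith [(hz θ hθ).2.1],
    by linarith [(hz θ hθ).2.2]⟩⟩
  have key := H (fun θ => (z θ - u θ)⁻¹) (by
      have h0 : 1 / ε < z 0 - u 0 := by linarith [(hz 0 hm0).2.1]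
      rw [abs_of_pos (inv_pos.2 (by linarith))]
      simpa using inv_strictAnti₀ he h0) (by
      intro θ hθ
      have hne : z θ - u θ ≠ 0 := by linarith [(hz θ hθ).2.1]
      refine HasDerivAt.congr_deriv (((hz θ hθ).1.sub (hu θ)).inv hne) ?_
      simp only [Pi.sub_apply]
      field_simp
      ring)
  have := inv_injective key
  linarith

lemma zero_of_small (k C : ℝ) (h : ∀ N : ℝ, 1 ≤ N → |k| * N ≤ C) : k = 0 := by
  by_contra hk
  have hk' : 0 < |k| := abs_pos.2 hk
  have := h (max 1 ((C + 1) / |k|)) (le_max_left _ _)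
  have h2 : (C + 1) / |k| ≤ max 1 ((C + 1) / |k|) := le_max_right _ _
  rw [div_le_iff₀ hk'] at h2
  linarith

/-- First order averaging. -/
lemma first_order (P1 P2 u Q : ℝ → ℝ) (m : ℝ) (hc2 : Continuous P2)
    (hu : ∀ θ, HasDerivAt u (P1 θ) θ) (hup : u (2 * π) = u 0)
    (hQ : ∀ θ, HasDerivAt Q (P2 θ - m) θ) (hQp : Q (2 * π) = Q 0)
    (hC : HasCenterAtZero (fun θ r => r * (P1 θ * r + P2 θ * r ^ 2))) : m = 0 := by
  have huc : Continuous u := continuous_iff_continuousAt.2 fun θ => (hu θ).continuousAt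
  obtain ⟨C, hCb⟩ := (isCompact_Icc (a := (0 : ℝ)) (b := 2 * π)).exists_bound_of_continuousOn
    (hc2.mul huc).continuousOn
  refine zero_of_small m C fun N hN => ?_
  obtain ⟨z, hzp, hz⟩ := periodic_large P1 P2 u hc2 hu hup hC N hN
  have hpi := Real.pi_pos
  have hd : ∀ θ ∈ Set.Icc (0 : ℝ) (2 * π), HasDerivAt (fun θ => z θ ^ 2 / 2 + Q θ)
      (- m - P2 θ * u θ / (z θ - u θ)) θ := by
    intro θ hθ
    have hne : z θ - u θ ≠ 0 := by linarith [(hz θ hθ).2.1]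
    refine HasDerivAt.congr_deriv ((((hz θ hθ).1.pow 2).div_const 2).add (hQ θ)) ?_
    field_simp
    ring
  obtain ⟨c, hc, hc0⟩ := exists_hasDerivAt_eq_zero (by linarith : (0 : ℝ) < 2 * π)
    (fun θ hθ => (hd θ hθ).continuousAt.continuousWithinAt) (by simp only [hzp, hQp])
    (fun θ hθ => hd θ ⟨hθ.1.le, hθ.2.le⟩)
  have hcm : c ∈ Set.Icc (0 : ℝ) (2 * π) := ⟨hc.1.le, hc.2.le⟩
  have hge := (hz c hcm).2.1
  have hne : z c - u c ≠ 0 := by linarith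
  have e : m * (z c - u c) = - (P2 c * u c) := by
    field_simp at hc0
    linarith
  have hb := hCb c hcm
  calc |m| * N ≤ |m| * (z c - u c) := mul_le_mul_of_nonneg_left hge (abs_nonneg _)
    _ = |m * (z c - u c)| := by rw [abs_mul, abs_of_pos (by linarith : 0 < z c - u c)]
    _ = |P2 c * u c| := by rw [e, abs_neg]
    _ ≤ C := hb

/-- Second order averaging. -/
lemma second_order (P1 P2 u Q S T : ℝ → ℝ) (k : ℝ) (hc2 : Continuous P2)
    (hu : ∀ θ, HasDerivAt u (P1 θ) θ) (hup : u (2 * π) = u 0)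
    (hQ : ∀ θ, HasDerivAt Q (P2 θ) θ) (hQp : Q (2 * π) = Q 0)
    (hS : ∀ θ, HasDerivAt S (P2 θ * u θ) θ) (hSp : S (2 * π) = S 0)
    (hT : ∀ θ, HasDerivAt T (P2 θ * u θ ^ 2 - k) θ) (hTp : T (2 * π) = T 0)
    (hC : HasCenterAtZero (fun θ r => r * (P1 θ * r + P2 θ * r ^ 2))) : k = 0 := by
  have huc : Continuous u := continuous_iff_continuousAt.2 fun θ => (hu θ).continuousAt
  have hSc : Continuous S := continuous_iff_continuousAt.2 fun θ => (hS θ).continuousAt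
  have hTc : Continuous T := continuous_iff_continuousAt.2 fun θ => (hT θ).continuousAt
  obtain ⟨C1, hC1⟩ := (isCompact_Icc (a := (0 : ℝ)) (b := 2 * π)).exists_bound_of_continuousOn
    (hc2.mul (hSc.sub (huc.pow 3))).continuousOn
  obtain ⟨C2, hC2⟩ := (isCompact_Icc (a := (0 : ℝ)) (b := 2 * π)).exists_bound_of_continuousOn
    (hc2.mul hTc).continuousOn
  refine zero_of_small k (C1 + 2 * C2) fun N hN => ?_
  obtain ⟨z, hzp, hz⟩ := periodic_large P1 P2 u hc2 hu hup hC N hN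
  have hpi := Real.pi_pos
  have hd : ∀ θ ∈ Set.Icc (0 : ℝ) (2 * π),
      HasDerivAt (fun θ => z θ ^ 2 / 2 + Q θ + S θ / z θ + T θ / z θ ^ 2)
      ((- k + P2 θ / (z θ - u θ) * (S θ - u θ ^ 3 + 2 * T θ / z θ)) / z θ ^ 2) θ := by
    intro θ hθ
    have hne : z θ - u θ ≠ 0 := by linarith [(hz θ hθ).2.1]
    have hne2 : z θ ≠ 0 := by linarith [(hz θ hθ).2.2]
    have hz' := (hz θ hθ).1
    refine HasDerivAt.congr_deriv (((((hz'.pow 2).div_const 2).add (hQ θ)).add ((hS θ).div hz' hne2)).add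
      ((hT θ).div (hz'.pow 2) (pow_ne_zero 2 hne2))) ?_
    field_simp
    ring
  obtain ⟨c, hc, hc0⟩ := exists_hasDerivAt_eq_zero (by linarith : (0 : ℝ) < 2 * π)
    (fun θ hθ => (hd θ hθ).continuousAt.continuousWithinAt) (by simp only [hzp, hQp, hSp, hTp])
    (fun θ hθ => hd θ ⟨hθ.1.le, hθ.2.le⟩)
  have hcm : c ∈ Set.Icc (0 : ℝ) (2 * π) := ⟨hc.1.le, hc.2.le⟩
  have hge := (hz c hcm).2.1
  have hge2 : 1 ≤ z c := by linarith [(hz c hcm).2.2]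
  have hne : z c - u c ≠ 0 := by linarith
  have hne2 : z c ≠ 0 := by linarith
  have e : k * (z c - u c) = P2 c * (S c - u c ^ 3) + 2 * ((P2 c * T c) / z c) := by
    rw [div_eq_zero_iff] at hc0
    rcases hc0 with hc0 | hc0
    · have : k = P2 c / (z c - u c) * (S c - u c ^ 3 + 2 * T c / z c) := by linarith
      rw [this]
      field_simp
    · exact absurd hc0 (pow_ne_zero 2 hne2)
  have hb1 : |P2 c * (S c - u c ^ 3)| ≤ C1 := hC1 c hcm
  have hb2 : |P2 c * T c| ≤ C2 := hC2 c hcm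
  have hb3 : |(P2 c * T c) / z c| ≤ C2 := by
    rw [abs_div, abs_of_pos (by linarith : 0 < z c)]
    exact (div_le_self (abs_nonneg _) hge2).trans hb2
  calc |k| * N ≤ |k| * (z c - u c) := mul_le_mul_of_nonneg_left hge (abs_nonneg _)
    _ = |k * (z c - u c)| := by rw [abs_mul, abs_of_pos (by linarith : 0 < z c - u c)]
    _ = |P2 c * (S c - u c ^ 3) + 2 * ((P2 c * T c) / z c)| := by rw [e]
    _ ≤ C1 + 2 * C2 := by
      refine (abs_add_le _ _).trans ?_
      rw [abs_mul 2, abs_two]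
      linarith

/-- Corollary 2.4: the equation `dr/dθ = r (P₁ r + P₂ r²)` has a center at `r = 0` iff
`p₂₀ + p₀₂ = 0` and `p₂₀(p₀₁² − p₁₀²) − p₁₁ p₁₀ p₀₁ = 0`. -/
theorem cubic_center_conditions
    (p10 p01 p20 p11 p02 : ℝ) (h : p10 ^ 2 + p01 ^ 2 ≠ 0)
    (P1 P2 : ℝ → ℝ)
    (hP1 : ∀ θ, P1 θ = p10 * Real.cos θ + p01 * Real.sin θ)
    (hP2 : ∀ θ, P2 θ = p20 * Real.cos θ ^ 2 + p11 * Real.cos θ * Real.sin θ +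
      p02 * Real.sin θ ^ 2) :
    HasCenterAtZero (fun θ r => r * (P1 θ * r + P2 θ * r ^ 2)) ↔
      (p20 + p02 = 0 ∧ p20 * (p01 ^ 2 - p10 ^ 2) - p11 * p10 * p01 = 0) := by
  have hc1 : Continuous P1 := by
    rw [funext hP1]; fun_prop
  have hc2 : Continuous P2 := by
    rw [funext hP2]; fun_prop
  constructor
  · intro hC
    have hu : ∀ θ, HasDerivAt (fun θ => p10 * sin θ - p01 * cos θ) (P1 θ) θ := by
      intro θ
      rw [hP1]
      refine HasDerivAt.congr_deriv (((hasDerivAt_sin θ).const_mul p10).sub ((hasDerivAt_cos θ).const_mul p01)) ?_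
      ring
    have hm : (p20 + p02) / 2 = 0 := by
      refine first_order P1 P2 (fun θ => p10 * sin θ - p01 * cos θ)
        (fun θ => (p20 - p02) / 2 * (sin θ * cos θ) + p11 / 2 * sin θ ^ 2) _ hc2 hu (by simp)
        ?_ (by simp) hC
      intro θ
      rw [hP2]
      refine HasDerivAt.congr_deriv ((((hasDerivAt_sin θ).mul (hasDerivAt_cos θ)).const_mul ((p20 - p02) / 2)).add
        (((hasDerivAt_sin θ).pow 2).const_mul (p11 / 2))) ?_
      have := sin_sq_add_cos_sq θ
      push_cast
      linear_combination (-(p20 + p02) / 2) * this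
    have hm2 : p20 + p02 = 0 := by linarith
    obtain rfl : p02 = - p20 := by linarith
    refine ⟨hm2, ?_⟩
    suffices hk : (p20 * (p01 ^ 2 - p10 ^ 2) - p11 * p10 * p01) / 4 = 0 by linarith
    refine second_order P1 P2 (fun θ => p10 * sin θ - p01 * cos θ)
        (fun θ => p20 * (sin θ * cos θ) + p11 / 2 * sin θ ^ 2)
        (fun θ => p20 * p10 * cos θ + (p11 * p01 / 3 - 2 * p20 * p10 / 3) * cos θ ^ 3
          + (- (p20 * p01)) * sin θ + (p11 * p10 / 3 + 2 * p20 * p01 / 3) * sin θ ^ 3)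
        (fun θ => (2 * p11 * p10 * p01 - 2 * p20 * p10 ^ 2 + 2 * p20 * p01 ^ 2) / 8
            * (sin θ * cos θ * (cos θ ^ 2 - sin θ ^ 2))
          + (p20 * p10 ^ 2 + p20 * p01 ^ 2) / 2 * (sin θ * cos θ)
          + (p11 * p10 ^ 2 + 2 * p20 * p10 * p01) / 4 * sin θ ^ 4
          + (2 * p20 * p10 * p01 - p11 * p01 ^ 2) / 4 * cos θ ^ 4)
        _ hc2 hu (by simp) ?_ (by simp) ?_ (by simp) ?_ (by simp) hC
    · intro θ
      rw [hP2]
      refine HasDerivAt.congr_deriv ((((hasDerivAt_sin θ).mul (hasDerivAt_cos θ)).const_mul p20).add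
        (((hasDerivAt_sin θ).pow 2).const_mul (p11 / 2))) ?_
      push_cast
      ring
    · intro θ
      rw [hP2]
      refine HasDerivAt.congr_deriv (((((hasDerivAt_cos θ).const_mul (p20 * p10)).add
        (((hasDerivAt_cos θ).pow 3).const_mul (p11 * p01 / 3 - 2 * p20 * p10 / 3))).add
        ((hasDerivAt_sin θ).const_mul (- (p20 * p01)))).add
        (((hasDerivAt_sin θ).pow 3).const_mul (p11 * p10 / 3 + 2 * p20 * p01 / 3))) ?_
      have := sin_sq_add_cos_sq θ
      push_cast
      generalize sin θ = s at *
      generalize cos θ = c at *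
      grind
    · intro θ
      rw [hP2]
      have hsc := (hasDerivAt_sin θ).mul (hasDerivAt_cos θ)
      refine HasDerivAt.congr_deriv ((((hsc.mul (((hasDerivAt_cos θ).pow 2).sub ((hasDerivAt_sin θ).pow 2))).const_mul
          ((2 * p11 * p10 * p01 - 2 * p20 * p10 ^ 2 + 2 * p20 * p01 ^ 2) / 8)).add
        (hsc.const_mul ((p20 * p10 ^ 2 + p20 * p01 ^ 2) / 2))).add
        (((hasDerivAt_sin θ).pow 4).const_mul ((p11 * p10 ^ 2 + 2 * p20 * p10 * p01) / 4)) |>.add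
        (((hasDerivAt_cos θ).pow 4).const_mul ((2 * p20 * p10 * p01 - p11 * p01 ^ 2) / 4))) ?_
      have := sin_sq_add_cos_sq θ
      simp only [Pi.mul_apply, Pi.sub_apply, Pi.pow_apply]
      push_cast
      generalize sin θ = s at *
      generalize cos θ = c at *
      grind
  · rintro ⟨h1, h2⟩
    obtain rfl : p02 = - p20 := by linarith
    refine ⟨1, one_pos, fun r _ hr => ?_⟩
    have hpi := Real.pi_pos
    -- a zero of `P1` in `[0, π]`
    obtain ⟨t, ht, ht0⟩ : ∃ t ∈ Set.Icc 0 π, P1 t = 0 := by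
      have hI := intermediate_value_uIcc (a := 0) (b := π) hc1.continuousOn
      have e0 : P1 0 = p10 := by simp [hP1]
      have e1 : P1 π = - p10 := by simp [hP1]
      rw [e0, e1, Set.uIcc_of_le hpi.le] at hI
      obtain ⟨t, ht, h0⟩ := hI (show (0 : ℝ) ∈ Set.uIcc p10 (-p10) by
        rw [Set.mem_uIcc]
        rcases le_total 0 p10 with h | h
        · right; constructor <;> linarith
        · left; constructor <;> linarith)
      exact ⟨t, ht, h0⟩
    have hP2t : P2 t = 0 := by
      rw [hP1] at ht0
      rw [hP2]
      have hsc := sin_sq_add_cos_sq t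
      have : (p10 ^ 2 + p01 ^ 2) * (p20 * cos t ^ 2 + p11 * cos t * sin t + -p20 * sin t ^ 2)
          = 0 := by
        generalize sin t = s at *
        generalize cos t = c at *
        grind
      exact (mul_eq_zero.1 this).resolve_left h
    have refl1 : ∀ s, P1 (t + s) = - P1 (t - s) := by
      intro s
      rw [hP1] at ht0
      rw [hP1, hP1, cos_add, sin_add, cos_sub, sin_sub]
      linear_combination 2 * cos s * ht0
    have refl2 : ∀ s, P2 (t + s) = - P2 (t - s) := by
      intro s
      rw [hP2] at hP2t
      rw [hP2, hP2, cos_add, sin_add, cos_sub, sin_sub]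
      linear_combination 2 * (cos s ^ 2 - sin s ^ 2) * hP2t
    have per1 : ∀ s, P1 (s + π) = - P1 s := by
      intro s; rw [hP1, hP1, cos_add_pi, sin_add_pi]; ring
    have per2 : ∀ s, P2 (s + π) = P2 s := by
      intro s; rw [hP2, hP2, cos_add_pi, sin_add_pi]; ring
    have a1 := center_reflect P1 P2 r hc1 hc2 t t ht.1
      (fun θ hθ => hr θ ⟨by linarith [hθ.1], by linarith [hθ.2, ht.2]⟩) refl1 refl2
    have a2 := center_reflect P1 P2 r hc1 hc2 (t + π) (π - t) (by linarith [ht.2])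
      (fun θ hθ => hr θ ⟨by linarith [hθ.1, ht.1], by linarith [hθ.2]⟩)
      (fun s => by
        rw [show t + π + s = t + s + π by ring, show t + π - s = t - s + π by ring, per1, per1,
          refl1])
      (fun s => by
        rw [show t + π + s = t + s + π by ring, show t + π - s = t - s + π by ring, per2, per2,
          refl2])
    rw [show t + π + (π - t) = 2 * π by ring, show t + π - (π - t) = t + t by ring] at a2
    rw [a2, a1, sub_self]
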